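/- Every rotation of four-dimensional Euclidean space is a pair of Clifford translations: for every real-linear isometry f : ℍ → ℍ with determinant 1, there exist unit quaternions a and b such that f(x) = a * x * b for all x ∈ ℍ; moreover the pair (a,b) is unique up to replacing it by (−a,−b). (This is Klein's description, based on Clifford's twists, of the group of direct isometries of elliptic 3-space.) -/

import Mathlib

open Quaternion

/-!
A rotation is a product of an even number of reflections in hyperplanes. On `ℍ` the reflection in
the hyperplane orthogonal to a unit quaternion `u` is `x ↦ -(u * star x * u)`, so the composite of
the reflections of `u` and `v` is `x ↦ (u * star v) * x * (star v * u)`, and maps of the form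
`x ↦ a * x * b` are closed under composition. If `a * x * b = a' * x * b'` for all `x`, then
`a'⁻¹ * a` commutes with every quaternion, hence is real, and being of norm one it is `±1`.
-/

section Reflections

open Submodule

variable {𝕜 E : Type*} [RCLike 𝕜] [NormedAddCommGroup E]

theorem exists_norm_eq_one_span_singleton_eq [NormedSpace 𝕜 E] {v : E} (hv : v ≠ 0) :
    ∃ u : E, ‖u‖ = 1 ∧ (𝕜 ∙ u) = 𝕜 ∙ v := by
  have h_norm : (‖v‖ : 𝕜)⁻¹ ≠ 0 := by simpa using hv
  exact ⟨(‖v‖ : 𝕜)⁻¹ • v, norm_smul_inv_norm hv, span_singleton_smul_eq h_norm.isUnit v⟩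

theorem reflection_top_eq_one [InnerProductSpace 𝕜 E] :
    (⊤ : Submodule 𝕜 E).reflection = 1 := by
  ext x
  exact reflection_mem_subspace_eq_self mem_top

/-- Mathlib's `LinearIsometryEquiv.reflections_generate_dim` also admits the zero vector, whose
reflection is the identity, so that the length of its list says nothing about the determinant. -/
theorem exists_eq_prod_reflections_of_norm_eq_one [InnerProductSpace ℝ E]
    [FiniteDimensional ℝ E] (φ : E ≃ₗᵢ[ℝ] E) :
    ∃ l : List E, (∀ u ∈ l, ‖u‖ = 1) ∧ φ = (l.map fun u ↦ (ℝ ∙ u)ᗮ.reflection).prod := by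
  obtain ⟨l, -, rfl⟩ := φ.reflections_generate_dim
  induction l with
  | nil => exact ⟨[], by simp⟩
  | cons v l ih =>
    obtain ⟨m, hm, hlm⟩ := ih
    obtain rfl | hv := eq_or_ne v 0
    · exact ⟨m, hm, by simpa [reflection_top_eq_one] using hlm⟩
    · obtain ⟨u, hu, huv⟩ := exists_norm_eq_one_span_singleton_eq (𝕜 := ℝ) hv
      exact ⟨u :: m, by simpa [hu] using hm, by simp [huv, hlm]⟩

variable [InnerProductSpace 𝕜 E] [FiniteDimensional 𝕜 E]

theorem det_reflection_orthogonal_span_singleton {v : E} (hv : v ≠ 0) :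
    LinearMap.det (𝕜 ∙ v)ᗮ.reflection.toLinearMap = -1 := by
  rw [det_reflection, orthogonal_orthogonal, finrank_span_singleton hv, pow_one]

theorem det_prod_reflections {l : List E} (hl : ∀ v ∈ l, v ≠ 0) :
    LinearMap.det (l.map fun v ↦ (𝕜 ∙ v)ᗮ.reflection).prod.toLinearMap = (-1) ^ l.length := by
  induction l with
  | nil => exact LinearMap.det_id.trans (pow_zero _).symm
  | cons v l ih =>
    rw [List.forall_mem_cons] at hl
    rw [List.map_cons, List.prod_cons, List.length_cons, pow_succ', ← ih hl.2,
      ← det_reflection_orthogonal_span_singleton (𝕜 := 𝕜) hl.1]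
    exact LinearMap.det_comp _ _

end Reflections

section TwoSidedMultiplication

open Submodule

theorem reflection_quaternion_apply {u : ℍ[ℝ]} (hu : ‖u‖ = 1) (x : ℍ[ℝ]) :
    (ℝ ∙ u)ᗮ.reflection x = -(u * star x * u) := by
  have h_inner : u * star x + x * star u = ((2 * inner ℝ u x : ℝ) : ℍ[ℝ]) := by
    rw [inner_def, ← self_add_star', star_mul, star_star]
  have hu' : star u * u = 1 := by
    rw [star_mul_self, normSq_eq_norm_mul_self, hu, one_mul, coe_one]
  rw [reflection_orthogonal_apply, reflection_singleton_apply, eq_sub_of_add_eq h_inner, sub_mul,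
    mul_assoc x, hu', mul_one, hu, coe_mul_eq_smul]
  simp [two_smul, add_smul, two_mul]

theorem reflection_reflection_quaternion_apply {u v : ℍ[ℝ]} (hu : ‖u‖ = 1) (hv : ‖v‖ = 1)
    (x : ℍ[ℝ]) :
    (ℝ ∙ u)ᗮ.reflection ((ℝ ∙ v)ᗮ.reflection x) = (u * star v) * x * (star v * u) := by
  simp [reflection_quaternion_apply, hu, hv, mul_assoc]

theorem exists_prod_reflections_apply_eq_mul_mul {l : List ℍ[ℝ]} (hl : ∀ u ∈ l, ‖u‖ = 1)
    (h_even : Even l.length) :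
    ∃ a b : ℍ[ℝ], ‖a‖ = 1 ∧ ‖b‖ = 1 ∧
      ∀ x, (l.map fun u ↦ (ℝ ∙ u)ᗮ.reflection).prod x = a * x * b := by
  induction l using List.twoStepInduction with
  | nil => exact ⟨1, 1, by simp⟩
  | singleton u => simp at h_even
  | cons_cons u v l ih _ =>
    simp only [List.forall_mem_cons] at hl
    obtain ⟨hu, hv, hl⟩ := hl
    obtain ⟨a, b, ha, hb, hab⟩ := ih hl (by simpa [Nat.even_add_one] using h_even)
    refine ⟨u * star v * a, b * (star v * u), by simp [hu, hv, ha], by simp [hu, hv, hb],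
      fun x ↦ ?_⟩
    calc (ℝ ∙ u)ᗮ.reflection ((ℝ ∙ v)ᗮ.reflection
          ((l.map fun u ↦ (ℝ ∙ u)ᗮ.reflection).prod x))
        = u * star v * (a * x * b) * (star v * u) := by
          rw [reflection_reflection_quaternion_apply hu hv, hab]
      _ = u * star v * a * x * (b * (star v * u)) := by simp only [mul_assoc]

theorem exists_apply_eq_mul_mul_of_det_eq_one (φ : ℍ[ℝ] ≃ₗᵢ[ℝ] ℍ[ℝ])
    (hφ : LinearMap.det φ.toLinearMap = 1) :
    ∃ a b : ℍ[ℝ], ‖a‖ = 1 ∧ ‖b‖ = 1 ∧ ∀ x, φ x = a * x * b := by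
  obtain ⟨l, hl, rfl⟩ := exists_eq_prod_reflections_of_norm_eq_one φ
  have hl₀ : ∀ u ∈ l, u ≠ 0 := fun u hu ↦ norm_ne_zero_iff.1 (hl u hu ▸ one_ne_zero)
  rw [det_prod_reflections hl₀, neg_one_pow_eq_one_iff_even (by norm_num)] at hφ
  exact exists_prod_reflections_apply_eq_mul_mul hl hφ

end TwoSidedMultiplication

section Uniqueness

instance isCentral_quaternion {R : Type*} [CommRing R] [IsAddTorsionFree R] :
    Algebra.IsCentral R ℍ[R] where
  out c hc := by
    rw [Subalgebra.mem_center_iff] at hc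
    let i : ℍ[R] := ⟨0, 1, 0, 0⟩
    let j : ℍ[R] := ⟨0, 0, 1, 0⟩
    have h_imI : c.imI = 0 := by
      have h : (j * c).imK = (c * j).imK := by rw [hc]
      rw [imK_mul, imK_mul] at h
      simpa [j, neg_eq_self] using h
    have h_imJ : c.imJ = 0 := by
      have h : (i * c).imK = (c * i).imK := by rw [hc]
      rw [imK_mul, imK_mul] at h
      simpa [i, self_eq_neg] using h
    have h_imK : c.imK = 0 := by
      have h : (i * c).imJ = (c * i).imJ := by rw [hc]
      rw [imJ_mul, imJ_mul] at h
      simpa [i, neg_eq_self] using h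
    exact Algebra.mem_bot.2 ⟨c.re, by ext <;> simp [h_imI, h_imJ, h_imK]⟩

theorem exists_eq_smul_of_forall_mul_mul_eq {K D : Type*} [CommSemiring K] [DivisionRing D]
    [Algebra K D] [Algebra.IsCentral K D] {a b a' b' : D} (ha' : a' ≠ 0) (hb : b ≠ 0)
    (h : ∀ x, a * x * b = a' * x * b') : ∃ r : K, a = r • a' ∧ b' = r • b := by
  set c := a'⁻¹ * a with hc_def
  have hb' : b' = c * b := by
    rw [hc_def, mul_assoc, eq_inv_mul_iff_mul_eq₀ ha']
    simpa using (h 1).symm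
  have hc_comm (x : D) : x * c = c * x := by
    apply mul_left_cancel₀ ha'
    apply mul_right_cancel₀ hb
    simpa [hb', hc_def, mul_assoc, ha'] using (h x).symm
  obtain ⟨r, hr⟩ := Algebra.IsCentral.mem_center_iff K |>.1 (Subalgebra.mem_center_iff.2 hc_comm)
  refine ⟨r, ?_, by rw [hb', hr, Algebra.smul_def]⟩
  rw [Algebra.smul_def, Algebra.commutes, ← hr, hc_def, mul_inv_cancel_left₀ ha']

theorem eq_or_eq_neg_of_forall_mul_mul_eq {D : Type*} [NormedDivisionRing D] [NormedAlgebra ℝ D]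
    [Algebra.IsCentral ℝ D] {a b a' b' : D} (ha' : a' ≠ 0) (hb : b ≠ 0) (h_norm : ‖a‖ = ‖a'‖)
    (h : ∀ x, a * x * b = a' * x * b') : (a' = a ∧ b' = b) ∨ (a' = -a ∧ b' = -b) := by
  obtain ⟨r, rfl, rfl⟩ := exists_eq_smul_of_forall_mul_mul_eq (K := ℝ) ha' hb h
  have hr : |r| = 1 := by simpa [norm_smul, ha'] using h_norm
  obtain rfl | rfl := eq_or_eq_neg_of_abs_eq hr <;> simp

end Uniqueness

/-- Every rotation of four-dimensional Euclidean space is a pair of Clifford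
translations: every real-linear isometry `f : ℍ → ℍ` with determinant `1` has the form
`x ↦ a * x * b` for unit quaternions `a`, `b`, unique up to replacing `(a, b)` by
`(-a, -b)`.  This is Klein's description, based on Clifford's twists, of the group of
direct isometries of elliptic 3-space. -/
theorem rotation_of_quaternions_eq_pair_of_clifford_translations
    (f : ℍ[ℝ] →ₗᵢ[ℝ] ℍ[ℝ]) (hdet : LinearMap.det f.toLinearMap = 1) :
    ∃ a b : ℍ[ℝ], ‖a‖ = 1 ∧ ‖b‖ = 1 ∧ (∀ x : ℍ[ℝ], f x = a * x * b) ∧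
      ∀ a' b' : ℍ[ℝ], ‖a'‖ = 1 → ‖b'‖ = 1 → (∀ x : ℍ[ℝ], f x = a' * x * b') →
        (a' = a ∧ b' = b) ∨ (a' = -a ∧ b' = -b) := by
  obtain ⟨a, b, ha, hb, hf⟩ :=
    exists_apply_eq_mul_mul_of_det_eq_one (f.toLinearIsometryEquiv rfl) hdet
  refine ⟨a, b, ha, hb, hf, fun a' b' ha' _ hf' ↦ ?_⟩
  have ha'₀ : a' ≠ 0 := norm_ne_zero_iff.1 (ha' ▸ one_ne_zero)
  have hb₀ : b ≠ 0 := norm_ne_zero_iff.1 (hb ▸ one_ne_zero)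
  exact eq_or_eq_neg_of_forall_mul_mul_eq ha'₀ hb₀ (ha.trans ha'.symm)
    fun x ↦ (hf x).symm.trans (hf' x)
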